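/- Every computably approximable real is strongly c.a. 0-speedable: if a real α ∈ (0,1) has a computable approximation, then it has a computable approximation {b_s} such that either α is rational or liminf_{s→∞} |(α − b_{s+1})/(α − b_s)| = 0. -/

import Mathlib

open Filter

/-- A computable approximation of a real `α`: a computable sequence of
rationals in `[0,1]` converging to `α`. -/
def IsCompApprox (a : ℕ → ℚ) (α : ℝ) : Prop :=
  Computable a ∧ (∀ s, a s ∈ Set.Icc (0 : ℚ) 1) ∧
    Tendsto (fun s => (a s : ℝ)) atTop (nhds α)

/-- A d.c.e. approximation: a computable approximation with bounded variation. -/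
def IsDCEApprox (a : ℕ → ℚ) (α : ℝ) : Prop :=
  IsCompApprox a α ∧ Summable (fun s => |(a (s + 1) : ℝ) - (a s : ℝ)|)

/-- A computable order: a nondecreasing unbounded computable function. -/
def IsComputableOrder (f : ℕ → ℕ) : Prop :=
  Computable f ∧ Monotone f ∧ Tendsto f atTop atTop

/-- The liminf (in the extended reals) of `|(α - a (f s)) / (α - a s)|`. -/
noncomputable def speedLiminf (a : ℕ → ℚ) (f : ℕ → ℕ) (α : ℝ) : EReal :=
  Filter.liminf (fun s => ((|(α - (a (f s) : ℝ)) / (α - (a s : ℝ))| : ℝ) : EReal)) atTop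

/-- A computable approximation `a` of `α` is `ρ`-speedable. -/
def IsRhoSpeedable (a : ℕ → ℚ) (α : ℝ) (ρ : ℚ) : Prop :=
  (∃ q : ℚ, α = (q : ℝ)) ∨
    ∃ f, IsComputableOrder f ∧ speedLiminf a f α ≤ (((ρ : ℝ) : EReal))

/-- A computable approximation is speedable if it is `ρ`-speedable for some rational
`ρ ∈ [0,1)`. -/
def IsSpeedable (a : ℕ → ℚ) (α : ℝ) : Prop :=
  ∃ ρ : ℚ, 0 ≤ ρ ∧ ρ < 1 ∧ IsRhoSpeedable a α ρ

/-- A Solovay test: computable sequences of rationals `l i ≤ r i` in `[0,1]`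
with `Σ (r i - l i) < ∞`. -/
structure SolovayTest where
  l : ℕ → ℚ
  r : ℕ → ℚ
  comp_l : Computable l
  comp_r : Computable r
  mem_l : ∀ i, l i ∈ Set.Icc (0 : ℚ) 1
  mem_r : ∀ i, r i ∈ Set.Icc (0 : ℚ) 1
  le : ∀ i, l i ≤ r i
  summable : Summable (fun i => (r i : ℝ) - (l i : ℝ))

/-- A real `γ` is covered by a Solovay test if `γ ∈ [l i, r i]` for infinitely many `i`. -/
def SolovayTest.Covers (T : SolovayTest) (γ : ℝ) : Prop :=
  ∃ᶠ i in atTop, γ ∈ Set.Icc (T.l i : ℝ) (T.r i : ℝ)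

/-- The sequence of endpoints `l 0, r 0, l 1, r 1, …` of a Solovay test. -/
def SolovayTest.endpoints (T : SolovayTest) (n : ℕ) : ℚ :=
  if n % 2 = 0 then T.l (n / 2) else T.r (n / 2)

/-!
For `α` irrational, let `K s` be the least `k` for which `a s` and `a (s + 1)` differ in the integer
part of their multiple by `4 ^ k`; then `K` tends to infinity. At the infinitely many stages `s`
where `K` attains its minimum over all later stages, `a s` never moves by more than about
`4 ^ (-K s)` again, so it is within that distance of `α`. Placing before each `a s` an extra point
`a s * (1 - 2 ^ (-K s))`, whose distance to `α` at such a stage is of the much larger order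
`2 ^ (-K s)`, makes the quotient across the pair of order `2 ^ (-K s)`.
-/

section Search

variable {α β γ : Type*} [Primcodable α] [Primcodable γ]

theorem computablePred_comp {p : α → Prop} {f : γ → α} (hp : ComputablePred p)
    (hf : Computable f) : ComputablePred fun c => p (f c) :=
  ComputablePred.computable_of_manyOneReducible (p := fun c => p (f c))
    ⟨f, hf, fun _ => Iff.rfl⟩ hp

theorem computable_of_graph [Denumerable β] {g : γ → β}
    (hg : ComputablePred fun p : γ × β => g p.1 = p.2) : Computable g := by
  classical
  have exists_code (c : γ) : ∃ n, g c = Denumerable.ofNat β n :=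
    ⟨Encodable.encode (g c), (Denumerable.ofNat_encode _).symm⟩
  have hfind : Computable fun c => Nat.find (exists_code c) :=
    Computable.find (computablePred_comp hg
      (Computable.fst.pair ((Computable.ofNat β).comp Computable.snd))) exists_code
  exact ((Computable.ofNat β).comp hfind).of_eq fun c => (Nat.find_spec (exists_code c)).symm

theorem primrec_count {p : ℕ → Prop} [DecidablePred p] (hp : PrimrecPred p) :
    Primrec (Nat.count p) := by
  have hstep : Primrec₂ fun n c : ℕ => c + if p n then 1 else 0 :=
    Primrec.nat_add.comp Primrec.snd
      (Primrec.ite (hp.comp Primrec.fst) (Primrec.const 1) (Primrec.const 0))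
  refine (Primrec.nat_rec₁ 0 hstep).of_eq fun n => ?_
  induction n with
  | zero => rfl
  | succ n ih => rw [Nat.count_succ, ← ih]

theorem nth_eq_iff_of_infinite {p : ℕ → Prop} [DecidablePred p]
    (hp : (Set.ofPred p).Infinite) {n m : ℕ} :
    Nat.nth p n = m ↔ p m ∧ Nat.count p m = n := by
  constructor
  · rintro rfl
    exact ⟨Nat.nth_mem_of_infinite hp n, Nat.count_nth_of_infinite hp n⟩
  · rintro ⟨hm, rfl⟩
    exact Nat.nth_count hm

theorem computable_nth {p : ℕ → Prop} (hp : PrimrecPred p) (hinf : (Set.ofPred p).Infinite) :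
    Computable (Nat.nth p) := by
  classical
  have hgraph : PrimrecPred fun q : ℕ × ℕ => p q.2 ∧ Nat.count p q.2 = q.1 :=
    (hp.comp Primrec.snd).and
      (Primrec.eq.comp ((primrec_count hp).comp Primrec.snd) Primrec.fst)
  exact computable_of_graph <| hgraph.computablePred.of_eq fun _ =>
    (nth_eq_iff_of_infinite hinf).symm

end Search

section EncodableOfInfinite

open Encodable Denumerable

theorem infinite_range_encode (α : Type*) [Encodable α] [Infinite α] :
    (Set.range (encode : α → ℕ)).Infinite :=
  Set.infinite_range_of_injective encode_injective

theorem nth_mem_eq_subtype_ofNat (S : Set ℕ) [DecidablePred (· ∈ S)] [Infinite S] (n : ℕ) :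
    Nat.nth (· ∈ S) n = Nat.Subtype.ofNat S n := by
  rw [← Nat.Subtype.orderIsoOfNat_apply]
  exact Nat.nth_apply_eq_orderIsoOfNat (Set.infinite_coe_iff.1 ‹Infinite S›) n

/- The primitive codable structure of `ℚ` comes from `ofEncodableOfInfinite`, which renumbers the
codes `encode x` in increasing order; the original code is recovered by enumerating the range. -/
theorem nth_encode_ofEncodableOfInfinite (α : Type*) [Encodable α] [Infinite α] (x : α) :
    Nat.nth (· ∈ Set.range (encode : α → ℕ)) ((ofEncodableOfInfinite α).encode x) = encode x := by
  let := decidableRangeEncode α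
  let : Infinite (Set.range (encode : α → ℕ)) := (infinite_range_encode α).to_subtype
  let := Nat.Subtype.denumerable (Set.range (encode : α → ℕ))
  rw [nth_mem_eq_subtype_ofNat]
  exact congrArg Subtype.val (ofNat_encode (equivRangeEncode α x))

theorem computable_encode_ofEncodableOfInfinite (α : Type*) [Encodable α] [Infinite α]
    (h : PrimrecPred (· ∈ Set.range (encode : α → ℕ))) :
    @Computable _ _ (@Primcodable.ofDenumerable α (ofEncodableOfInfinite α)) _
      (encode : α → ℕ) := by
  let := ofEncodableOfInfinite α
  exact ((computable_nth h (infinite_range_encode α)).comp Computable.encode).of_eq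
    (nth_encode_ofEncodableOfInfinite α)

end EncodableOfInfinite

section Int

open Encodable Denumerable

theorem encode_int_natCast (n : ℕ) : encode (n : ℤ) = 2 * n := rfl

theorem encode_int_negSucc (n : ℕ) : encode (Int.negSucc n) = 2 * n + 1 := rfl

theorem primrec_int_natAbs : Primrec Int.natAbs := by
  have hhalf : Primrec fun z : ℤ => (encode z + 1) / 2 :=
    Primrec.nat_div.comp (Primrec.succ.comp Primrec.encode) (Primrec.const 2)
  refine hhalf.of_eq fun z => ?_
  cases z with
  | ofNat n => rw [Int.ofNat_eq_natCast, encode_int_natCast]; omega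
  | negSucc n => rw [encode_int_negSucc]; omega

theorem primrec_int_toNat : Primrec Int.toNat := by
  have hhalf : Primrec fun z : ℤ => bif (encode z).bodd then 0 else (encode z).div2 :=
    Primrec.cond (Primrec.nat_bodd.comp Primrec.encode) (Primrec.const 0)
      (Primrec.nat_div2.comp Primrec.encode)
  refine hhalf.of_eq fun z => ?_
  cases z with
  | ofNat n => simp [encode_int_natCast]
  | negSucc n => simp [encode_int_negSucc]

theorem primrec_int_subNatNat : Primrec₂ Int.subNatNat := by
  have hcode : Primrec fun p : ℕ × ℕ =>
      if p.1 < p.2 then 2 * (p.2 - p.1) - 1 else 2 * (p.1 - p.2) :=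
    Primrec.ite (Primrec.nat_lt.comp Primrec.fst Primrec.snd)
      (Primrec.pred.comp (Primrec.nat_double.comp (Primrec.nat_sub.comp Primrec.snd Primrec.fst)))
      (Primrec.nat_double.comp (Primrec.nat_sub.comp Primrec.fst Primrec.snd))
  refine Primrec.encode_iff.1 (hcode.of_eq fun ⟨m, n⟩ => ?_)
  by_cases h : m < n
  · rw [if_pos h, Int.subNatNat_of_lt h, encode_int_negSucc, Nat.pred_eq_sub_one]
    omega
  · rw [if_neg h, Int.subNatNat_of_le (not_lt.1 h), encode_int_natCast]

theorem primrec_int_natCast : Primrec (Nat.cast : ℕ → ℤ) :=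
  (primrec_int_subNatNat.comp Primrec.id (Primrec.const 0)).of_eq fun _ => by
    simp [Int.subNatNat_eq_coe]

theorem primrec_int_neg : Primrec fun z : ℤ => -z :=
  (primrec_int_subNatNat.comp (Primrec.nat_sub.comp primrec_int_natAbs primrec_int_toNat)
    primrec_int_toNat).of_eq fun z => by rw [Int.subNatNat_eq_coe]; omega

theorem primrec_int_mul : Primrec₂ fun x y : ℤ => x * y := by
  have pos₁ : Primrec fun p : ℤ × ℤ => p.1.toNat := primrec_int_toNat.comp Primrec.fst
  have pos₂ : Primrec fun p : ℤ × ℤ => p.2.toNat := primrec_int_toNat.comp Primrec.snd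
  have neg₁ : Primrec fun p : ℤ × ℤ => (-p.1).toNat :=
    primrec_int_toNat.comp (primrec_int_neg.comp Primrec.fst)
  have neg₂ : Primrec fun p : ℤ × ℤ => (-p.2).toNat :=
    primrec_int_toNat.comp (primrec_int_neg.comp Primrec.snd)
  refine (primrec_int_subNatNat.comp
    (Primrec.nat_add.comp (Primrec.nat_mul.comp pos₁ pos₂) (Primrec.nat_mul.comp neg₁ neg₂))
    (Primrec.nat_add.comp (Primrec.nat_mul.comp pos₁ neg₂) (Primrec.nat_mul.comp neg₁ pos₂))).of_eq
      fun p => ?_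
  calc Int.subNatNat (p.1.toNat * p.2.toNat + (-p.1).toNat * (-p.2).toNat)
        (p.1.toNat * (-p.2).toNat + (-p.1).toNat * p.2.toNat)
      = ((p.1.toNat : ℤ) - (-p.1).toNat) * ((p.2.toNat : ℤ) - (-p.2).toNat) := by
        rw [Int.subNatNat_eq_coe]; push_cast; ring
    _ = p.1 * p.2 := by rw [Int.toNat_sub_toNat_neg, Int.toNat_sub_toNat_neg]

end Int

section Rat

open Encodable Denumerable

theorem primrec_nat_pow : Primrec₂ fun m n : ℕ => m ^ n :=
  Primrec₂.unpaired'.1 Nat.Primrec.pow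

theorem coprime_iff_forall_lt_dvd (m n : ℕ) :
    m.Coprime n ↔ ∀ k < m + n + 1, ¬(k ∣ m ∧ k ∣ n) ∨ k = 1 := by
  constructor
  · intro h k _
    exact or_iff_not_imp_left.2 fun hk =>
      Nat.eq_one_of_dvd_coprimes h (not_not.1 hk).1 (not_not.1 hk).2
  · intro h
    have hlt : m.gcd n < m + n + 1 := by
      rcases m.eq_zero_or_pos with rfl | hm
      · simp
      · have := Nat.gcd_le_left n hm
        omega
    exact (h _ hlt).resolve_left (not_not.2 ⟨m.gcd_dvd_left n, m.gcd_dvd_right n⟩)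

theorem primrecRel_nat_dvd : PrimrecRel fun m n : ℕ => m ∣ n :=
  (Primrec.eq.comp (Primrec.nat_mod.comp Primrec.snd Primrec.fst) (Primrec.const 0)).of_eq
    fun _ => Nat.dvd_iff_mod_eq_zero.symm

theorem primrecRel_nat_coprime : PrimrecRel Nat.Coprime := by
  have m : Primrec fun p : ℕ × ℕ × ℕ => p.2.1 := Primrec.fst.comp Primrec.snd
  have n : Primrec fun p : ℕ × ℕ × ℕ => p.2.2 := Primrec.snd.comp Primrec.snd
  have hdvd : PrimrecRel fun (k : ℕ) (p : ℕ × ℕ) => ¬(k ∣ p.1 ∧ k ∣ p.2) ∨ k = 1 :=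
    ((primrecRel_nat_dvd.comp Primrec.fst m).and (primrecRel_nat_dvd.comp Primrec.fst n)).not.or
      (Primrec.eq.comp Primrec.fst (Primrec.const 1))
  have hrange : Primrec fun p : ℕ × ℕ => List.range (p.1 + p.2 + 1) :=
    Primrec.list_range.comp (Primrec.succ.comp Primrec.nat_add)
  exact (hdvd.forall_mem_list.comp hrange Primrec.id).of_eq fun p => by
    simp only [List.mem_range, id_eq, coprime_iff_forall_lt_dvd]

theorem encode_rat (q : ℚ) : @encode ℚ Rat.instEncodable q = Nat.pair (encode q.num) q.den := rfl

theorem mem_range_encode_rat_iff (m : ℕ) :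
    m ∈ Set.range (@encode ℚ Rat.instEncodable) ↔
      m.unpair.2 ≠ 0 ∧ (ofNat ℤ m.unpair.1).natAbs.Coprime m.unpair.2 := by
  constructor
  · rintro ⟨q, rfl⟩
    rw [encode_rat, Nat.unpair_pair, ofNat_encode]
    exact ⟨q.den_nz, q.reduced⟩
  · rintro ⟨hden, hcoprime⟩
    refine ⟨⟨ofNat ℤ m.unpair.1, m.unpair.2, hden, hcoprime⟩, ?_⟩
    rw [encode_rat, encode_ofNat, Nat.pair_unpair]

theorem primrecPred_range_encode_rat :
    PrimrecPred (· ∈ Set.range (@encode ℚ Rat.instEncodable)) := by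
  have hden : Primrec fun m : ℕ => m.unpair.2 := Primrec.snd.comp Primrec.unpair
  have hnum : Primrec fun m : ℕ => (ofNat ℤ m.unpair.1).natAbs :=
    primrec_int_natAbs.comp ((Primrec.ofNat ℤ).comp (Primrec.fst.comp Primrec.unpair))
  exact ((Primrec.eq.comp hden (Primrec.const 0)).not.and
    (primrecRel_nat_coprime.comp hnum hden)).of_eq fun m => (mem_range_encode_rat_iff m).symm

theorem computable_encode_rat : Computable (@encode ℚ Rat.instEncodable) :=
  @computable_encode_ofEncodableOfInfinite ℚ Rat.instEncodable _ primrecPred_range_encode_rat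

theorem computable_rat_num : Computable Rat.num :=
  ((Computable.ofNat ℤ).comp (Computable.fst.comp
    (Computable.unpair.comp computable_encode_rat))).of_eq fun q => by
    rw [encode_rat, Nat.unpair_pair, ofNat_encode]

theorem computable_rat_den : Computable Rat.den :=
  (Computable.snd.comp (Computable.unpair.comp computable_encode_rat)).of_eq
    fun q => by rw [encode_rat, Nat.unpair_pair]

theorem mkRat_eq_iff_num_den (z : ℤ) (n : ℕ) (q : ℚ) :
    mkRat z n = q ↔ (n = 0 ∧ q.num = 0) ∨ (n ≠ 0 ∧ z * q.den = q.num * n) := by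
  rcases eq_or_ne n 0 with rfl | hn
  · simp [eq_comm]
  · simp only [hn, false_and, ne_eq, not_false_eq_true, true_and, false_or]
    rw [← Rat.mkRat_eq_iff hn q.den_nz, Rat.mkRat_self]

theorem computable_mkRat : Computable₂ mkRat := by
  have hgraph : PrimrecPred fun p : (ℤ × ℕ) × (ℤ × ℕ) =>
      (p.1.2 = 0 ∧ p.2.1 = 0) ∨ (p.1.2 ≠ 0 ∧ p.1.1 * p.2.2 = p.2.1 * p.1.2) := by
    have z : Primrec fun p : (ℤ × ℕ) × (ℤ × ℕ) => p.1.1 := Primrec.fst.comp Primrec.fst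
    have n : Primrec fun p : (ℤ × ℕ) × (ℤ × ℕ) => p.1.2 := Primrec.snd.comp Primrec.fst
    have num : Primrec fun p : (ℤ × ℕ) × (ℤ × ℕ) => p.2.1 := Primrec.fst.comp Primrec.snd
    have den : Primrec fun p : (ℤ × ℕ) × (ℤ × ℕ) => p.2.2 := Primrec.snd.comp Primrec.snd
    have n_eq_zero := Primrec.eq.comp n (Primrec.const 0)
    exact (n_eq_zero.and (Primrec.eq.comp num (Primrec.const 0))).or
      (n_eq_zero.not.and (Primrec.eq.comp
        (primrec_int_mul.comp z (primrec_int_natCast.comp den))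
        (primrec_int_mul.comp num (primrec_int_natCast.comp n))))
  have hcoords : Computable fun p : (ℤ × ℕ) × ℚ => (p.1, p.2.num, p.2.den) :=
    Computable.fst.pair ((computable_rat_num.comp Computable.snd).pair
      (computable_rat_den.comp Computable.snd))
  exact computable_of_graph <| (computablePred_comp hgraph.computablePred hcoords).of_eq
    fun p => (mkRat_eq_iff_num_den p.1.1 p.1.2 p.2).symm

theorem computable_rat_mul : Computable₂ fun x y : ℚ => x * y :=
  (computable_mkRat.comp
    (primrec_int_mul.to_comp.comp (computable_rat_num.comp Computable.fst)
      (computable_rat_num.comp Computable.snd))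
    (Primrec.nat_mul.to_comp.comp (computable_rat_den.comp Computable.fst)
      (computable_rat_den.comp Computable.snd))).of_eq fun p => (Rat.mul_def' p.1 p.2).symm

theorem rat_natFloor_eq_toNat_num_div_den (q : ℚ) : ⌊q⌋₊ = q.num.toNat / q.den := by
  rw [← Int.floor_toNat, Rat.floor_def']
  rcases le_total 0 q.num with hnum | hnum
  · lift q.num to ℕ using hnum with n
    norm_cast
  · rw [Int.toNat_of_nonpos hnum, Nat.zero_div, Int.toNat_of_nonpos]
    exact Int.ediv_nonpos_of_nonpos_of_neg hnum (mod_cast q.den_pos)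

theorem computable_rat_natFloor : Computable (Nat.floor : ℚ → ℕ) :=
  (Primrec.nat_div.to_comp.comp (primrec_int_toNat.to_comp.comp computable_rat_num)
    computable_rat_den).of_eq fun q => (rat_natFloor_eq_toNat_num_div_den q).symm

end Rat

section Interleave

variable {β : Type*}

/-- The sequence `x 0, y 0, x 1, y 1, …`. -/
def interleave (x y : ℕ → β) (n : ℕ) : β :=
  bif n.bodd then y n.div2 else x n.div2

theorem interleave_two_mul (x y : ℕ → β) (n : ℕ) : interleave x y (2 * n) = x n := by
  simp [interleave]

theorem interleave_two_mul_add_one (x y : ℕ → β) (n : ℕ) :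
    interleave x y (2 * n + 1) = y n := by
  simp [interleave]

theorem computable_interleave [Primcodable β] {x y : ℕ → β} (hx : Computable x)
    (hy : Computable y) : Computable (interleave x y) :=
  Computable.cond Primrec.nat_bodd.to_comp (hy.comp Primrec.nat_div2.to_comp)
    (hx.comp Primrec.nat_div2.to_comp)

theorem interleave_mem {S : Set β} {x y : ℕ → β} (hx : ∀ n, x n ∈ S) (hy : ∀ n, y n ∈ S)
    (n : ℕ) : interleave x y n ∈ S := by
  cases h : n.bodd <;> simp [interleave, h, hx, hy]

theorem tendsto_interleave {l : Filter β} {x y : ℕ → β} (hx : Tendsto x atTop l)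
    (hy : Tendsto y atTop l) : Tendsto (interleave x y) atTop l := by
  have hdiv2 : Tendsto Nat.div2 atTop atTop :=
    tendsto_atTop_mono (fun n => n.div2_val.ge) (Nat.tendsto_div_const_atTop two_ne_zero)
  refine tendsto_def.2 fun S hS => ?_
  filter_upwards [hdiv2.eventually (hx hS), hdiv2.eventually (hy hS)] with n hxn hyn
  cases h : n.bodd
  · simpa [interleave, h] using hxn
  · simpa [interleave, h] using hyn

theorem isCompApprox_interleave {x y : ℕ → ℚ} {α : ℝ} (hx : IsCompApprox x α)
    (hy : IsCompApprox y α) : IsCompApprox (interleave x y) α := by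
  obtain ⟨computable_x, mem_x, tendsto_x⟩ := hx
  obtain ⟨computable_y, mem_y, tendsto_y⟩ := hy
  exact ⟨computable_interleave computable_x computable_y, interleave_mem mem_x mem_y,
    tendsto_comap_iff.1 (tendsto_interleave (tendsto_comap_iff.2 tendsto_x)
      (tendsto_comap_iff.2 tendsto_y))⟩

end Interleave

section Limits

theorem eventually_floor_eq {ι R : Type*} [Ring R] [LinearOrder R] [IsStrictOrderedRing R]
    [FloorRing R] [TopologicalSpace R] [OrderTopology R] {l : Filter ι} {u : ι → R} {y : R}
    (hu : Tendsto u l (nhds y)) (hy : (⌊y⌋ : R) ≠ y) : ∀ᶠ i in l, ⌊u i⌋ = ⌊y⌋ := by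
  filter_upwards [hu.eventually (Ioo_mem_nhds (lt_of_le_of_ne (Int.floor_le y) hy)
    (Int.lt_floor_add_one y))] with i hi
  exact Int.floor_eq_iff.2 ⟨hi.1.le, hi.2⟩

theorem frequently_forall_ge_le {β : Type*} [LinearOrder β] [WellFoundedLT β] (f : ℕ → β) :
    ∃ᶠ s in atTop, ∀ t ≥ s, f s ≤ f t := by
  refine frequently_atTop.2 fun N => ?_
  obtain ⟨_, ⟨s, hNs, rfl⟩, hs⟩ :=
    wellFounded_lt.has_min (f '' Set.Ici N) (Set.nonempty_Ici.image f)
  exact ⟨s, hNs, fun t hst => not_lt.1 (hs _ ⟨t, le_trans hNs hst, rfl⟩)⟩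

theorem liminf_coe_ereal_eq_zero {ι : Type*} {l : Filter ι} {u : ι → ℝ} (hu : ∀ i, 0 ≤ u i)
    (hsmall : ∀ ε > 0, ∃ᶠ i in l, u i ≤ ε) : liminf (fun i => (u i : EReal)) l = 0 := by
  apply le_antisymm
  · refine EReal.le_of_forall_lt_iff_le.1 fun ε hε => ?_
    refine liminf_le_of_frequently_le' ((hsmall ε (EReal.coe_pos.1 hε)).mono fun i hi => ?_)
    exact EReal.coe_le_coe_iff.2 hi
  · exact le_liminf_of_le (by isBoundedDefault)
      (Eventually.of_forall fun i => EReal.coe_nonneg.2 (hu i))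

end Limits

section FirstChange

variable {a : ℕ → ℚ} {α : ℝ}

theorem exists_firstChange (a : ℕ → ℚ) (s : ℕ) :
    ∃ k, s ≤ k ∨ ⌊4 ^ k * a s⌋₊ ≠ ⌊4 ^ k * a (s + 1)⌋₊ :=
  ⟨s, Or.inl le_rfl⟩

/-- The least `k` such that the integer parts of `4 ^ k * a s` and `4 ^ k * a (s + 1)` differ,
capped at `s` so that it exists, and can be found by search, even when `a s = a (s + 1)`. -/
def firstChange (a : ℕ → ℚ) (s : ℕ) : ℕ :=
  Nat.find (exists_firstChange a s)

theorem computable_firstChange (ha : Computable a) : Computable (firstChange a) := by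
  have hscale : Computable₂ fun (k : ℕ) (q : ℚ) => ⌊4 ^ k * q⌋₊ := by
    have hpow : Computable fun k : ℕ => mkRat ((4 ^ k : ℕ) : ℤ) 1 :=
      computable_mkRat.comp (primrec_int_natCast.comp
        (primrec_nat_pow.comp (Primrec.const 4) Primrec.id)).to_comp (Computable.const 1)
    refine (computable_rat_natFloor.comp
      (computable_rat_mul.comp (hpow.comp Computable.fst) Computable.snd)).of_eq fun p => ?_
    simp [Rat.mkRat_one]
  have hcoords : Computable fun p : ℕ × ℕ =>
      (p, ⌊4 ^ p.2 * a p.1⌋₊, ⌊4 ^ p.2 * a (p.1 + 1)⌋₊) :=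
    Computable.id.pair ((hscale.comp Computable.snd (ha.comp Computable.fst)).pair
      (hscale.comp Computable.snd (ha.comp (Computable.succ.comp Computable.fst))))
  have hchange : PrimrecPred fun p : (ℕ × ℕ) × ℕ × ℕ => p.1.1 ≤ p.1.2 ∨ p.2.1 ≠ p.2.2 :=
    (Primrec.nat_le.comp (Primrec.fst.comp Primrec.fst) (Primrec.snd.comp Primrec.fst)).or
      (Primrec.eq.comp (Primrec.fst.comp Primrec.snd) (Primrec.snd.comp Primrec.snd)).not
  exact Computable.find (computablePred_comp hchange.computablePred hcoords) (exists_firstChange a)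

theorem natFloor_eq_of_lt_firstChange {s k : ℕ} (h : k < firstChange a s) :
    ⌊4 ^ k * a s⌋₊ = ⌊4 ^ k * a (s + 1)⌋₊ :=
  not_not.1 (not_or.1 (Nat.find_min (exists_firstChange a s) h)).2

theorem tendsto_firstChange
    (ha : Tendsto (fun s => (a s : ℝ)) atTop (nhds α)) (hα : Irrational α) :
    Tendsto (firstChange a) atTop atTop := by
  have hfloor (k : ℕ) : ∀ᶠ s in atTop, ⌊4 ^ k * a s⌋ = ⌊4 ^ k * α⌋ := by
    have hirr : Irrational (4 ^ k * α) := by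
      simpa using hα.natCast_mul (pow_ne_zero k four_ne_zero)
    filter_upwards [eventually_floor_eq (ha.const_mul (4 ^ k)) (hirr.ne_int _).symm] with s hs
    exact_mod_cast hs
  refine tendsto_atTop.2 fun N => ?_
  have hall : ∀ᶠ s in atTop, ∀ k < N, ⌊4 ^ k * a s⌋ = ⌊4 ^ k * a (s + 1)⌋ :=
    (eventually_all_finite (Set.finite_lt_nat N)).2 fun k _ => by
      filter_upwards [hfloor k, (tendsto_add_atTop_nat 1).eventually (hfloor k)] with s hs hs'
      exact hs.trans hs'.symm
  filter_upwards [hall, eventually_ge_atTop N] with s hs hNs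
  refine (Nat.le_find_iff _ _).2 fun k hk => ?_
  rw [not_or, not_not, not_le, ← Int.floor_toNat, ← Int.floor_toNat, hs k hk]
  exact ⟨hk.trans_le hNs, rfl⟩

theorem abs_sub_le_of_lt_firstChange {s k : ℕ} (ha₀ : ∀ t, 0 ≤ a t)
    (ha : Tendsto (fun t => (a t : ℝ)) atTop (nhds α)) (hk : ∀ t ≥ s, k < firstChange a t) :
    |α - a s| ≤ 1 / 4 ^ k := by
  have hfloor : ∀ t ≥ s, ⌊4 ^ k * a t⌋₊ = ⌊4 ^ k * a s⌋₊ := fun t hst => by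
    induction t, hst using Nat.le_induction with
    | base => rfl
    | succ t hst ih => rw [← natFloor_eq_of_lt_firstChange (hk t hst), ih]
  have hclose : ∀ t ≥ s, |(a t : ℝ) - a s| ≤ 1 / 4 ^ k := fun t hst => by
    have hlt : |4 ^ k * a t - 4 ^ k * a s| < 1 := by
      apply Int.abs_sub_lt_one_of_floor_eq_floor
      have h4 (u) : 0 ≤ 4 ^ k * a u := mul_nonneg (by positivity) (ha₀ u)
      rw [← Int.natCast_floor_eq_floor (h4 t), ← Int.natCast_floor_eq_floor (h4 s), hfloor t hst]
    rw [← mul_sub, abs_mul, abs_of_pos (by positivity : (0 : ℚ) < 4 ^ k),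
      ← lt_div_iff₀' (by positivity)] at hlt
    simpa using! (Rat.cast_le (K := ℝ)).2 hlt.le
  exact le_of_tendsto (ha.sub_const (a s : ℝ)).abs (eventually_atTop.2 ⟨s, hclose⟩)

end FirstChange

section Quotients

theorem abs_sub_div_sub_mul_one_sub_le {α x r C : ℝ} (hr : 0 < r) (hC : C * (r ^ 2 + r) < α)
    (hx : |α - x| ≤ C * r ^ 2) :
    |(α - x) / (α - x * (1 - r))| ≤ C * r / (α - C * (r ^ 2 + r)) := by
  have : 0 < α - C * (r ^ 2 + r) := sub_pos.2 hC
  have hlower : r * (α - C * (r ^ 2 + r)) ≤ |α - x * (1 - r)| :=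
    calc r * (α - C * (r ^ 2 + r)) = (α - C * r ^ 2) * r - C * r ^ 2 := by ring
      _ ≤ x * r - |α - x| := by
        have := le_of_abs_le hx
        gcongr
        linarith
      _ ≤ x * r + (α - x) := by linarith [neg_abs_le (α - x)]
      _ = α - x * (1 - r) := by ring
      _ ≤ |α - x * (1 - r)| := le_abs_self _
  calc |(α - x) / (α - x * (1 - r))| = |α - x| / |α - x * (1 - r)| := abs_div _ _
    _ ≤ C * r ^ 2 / (r * (α - C * (r ^ 2 + r))) := by gcongr; exact (abs_nonneg _).trans hx
    _ = C * r / (α - C * (r ^ 2 + r)) := by field_simp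

theorem liminf_interleave_eq_zero {a r : ℕ → ℚ} {α C : ℝ} (hα : 0 < α) (hr₀ : ∀ s, 0 < r s)
    (hr : Tendsto (fun s => (r s : ℝ)) atTop (nhds 0))
    (hclose : ∃ᶠ s in atTop, |α - a s| ≤ C * (r s : ℝ) ^ 2) :
    liminf (fun n => ((|(α - (interleave (fun s => a s * (1 - r s)) a (n + 1) : ℚ)) /
      (α - (interleave (fun s => a s * (1 - r s)) a n : ℚ))| : ℝ) : EReal)) atTop = 0 := by
  refine liminf_coe_ereal_eq_zero (fun _ => abs_nonneg _) fun ε hε => ?_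
  have hgap : Tendsto (fun s => C * ((r s : ℝ) ^ 2 + r s)) atTop (nhds 0) := by
    simpa using ((hr.pow 2).add hr).const_mul C
  have hbound : Tendsto (fun s => C * r s / (α - C * ((r s : ℝ) ^ 2 + r s))) atTop (nhds 0) := by
    simpa using! (hr.const_mul C).div (hgap.const_sub α) (by simpa using hα.ne')
  have htwo : Tendsto (fun s => 2 * s) atTop atTop := tendsto_id.const_mul_atTop' two_pos
  refine htwo.frequently ((hclose.and_eventually
    ((hgap.eventually_lt_const hα).and (hbound.eventually_le_const hε))).mono ?_)
  rintro s ⟨hs, hgap_s, hbound_s⟩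
  rw [interleave_two_mul, interleave_two_mul_add_one]
  push_cast
  exact (abs_sub_div_sub_mul_one_sub_le (mod_cast hr₀ s) hgap_s hs).trans hbound_s

end Quotients

section Undershoot

variable {a : ℕ → ℚ} {α : ℝ}

theorem tendsto_half_pow_firstChange
    (ha : Tendsto (fun s => (a s : ℝ)) atTop (nhds α)) (hα : Irrational α) :
    Tendsto (fun s => (((1 / 2) ^ firstChange a s : ℚ) : ℝ)) atTop (nhds 0) := by
  push_cast
  exact (tendsto_pow_atTop_nhds_zero_of_lt_one (by norm_num) (by norm_num)).comp
    (tendsto_firstChange ha hα)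

theorem frequently_abs_sub_le_firstChange (ha : IsCompApprox a α) (hα : Irrational α) :
    ∃ᶠ s in atTop, |α - a s| ≤ 4 * (((1 / 2) ^ firstChange a s : ℚ) : ℝ) ^ 2 := by
  obtain ⟨_, mem_a, tendsto_a⟩ := ha
  refine ((frequently_forall_ge_le (firstChange a)).and_eventually
    ((tendsto_firstChange tendsto_a hα).eventually_gt_atTop 0)).mono ?_
  rintro s ⟨hmin, hpos⟩
  obtain ⟨k, hk⟩ := Nat.exists_eq_add_one.2 hpos
  calc |α - a s| ≤ 1 / 4 ^ k :=
        abs_sub_le_of_lt_firstChange (fun t => (mem_a t).1) tendsto_a fun t hst =>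
          k.lt_succ_self.trans_le (hk.ge.trans (hmin t hst))
    _ = 4 * (((1 / 2) ^ firstChange a s : ℚ) : ℝ) ^ 2 := by
        rw [hk, Rat.cast_pow, pow_right_comm, (by norm_num : ((1 / 2 : ℚ) : ℝ) ^ 2 = 1 / 4),
          pow_succ, one_div_pow]
        ring

/-- The perturbation of `a` interleaved with it: at a stage where `a s` is within order
`4 ^ (-firstChange a s)` of a positive limit, the distance of this point from the limit has the
larger order `2 ^ (-firstChange a s)`. -/
def undershoot (a : ℕ → ℚ) (s : ℕ) : ℚ :=
  a s * (1 - (1 / 2) ^ firstChange a s)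

theorem computable_one_sub_half_pow : Computable fun k : ℕ => (1 - (1 / 2) ^ k : ℚ) := by
  have htwo_pow : Primrec fun k : ℕ => 2 ^ k := primrec_nat_pow.comp (Primrec.const 2) Primrec.id
  refine (computable_mkRat.comp (primrec_int_subNatNat.comp htwo_pow (Primrec.const 1)).to_comp
    htwo_pow.to_comp).of_eq fun k => ?_
  rw [Int.subNatNat_eq_coe, Rat.mkRat_eq_div]
  simp [sub_div]

theorem isCompApprox_undershoot (ha : IsCompApprox a α) (hα : Irrational α) :
    IsCompApprox (undershoot a) α := by
  obtain ⟨computable_a, mem_a, tendsto_a⟩ := ha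
  have hfactor (k : ℕ) : (1 - (1 / 2) ^ k : ℚ) ∈ Set.Icc 0 1 :=
    ⟨sub_nonneg.2 (pow_le_one₀ (by norm_num) (by norm_num)), sub_le_self _ (by positivity)⟩
  refine ⟨computable_rat_mul.comp computable_a
    (computable_one_sub_half_pow.comp (computable_firstChange computable_a)),
    fun s => ⟨mul_nonneg (mem_a s).1 (hfactor _).1,
      mul_le_one₀ (mem_a s).2 (hfactor _).1 (hfactor _).2⟩, ?_⟩
  simpa [undershoot] using tendsto_a.mul ((tendsto_half_pow_firstChange tendsto_a hα).const_sub 1)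

end Undershoot

theorem ca_is_strongly_zero_speedable (α : ℝ) (hα : α ∈ Set.Ioo (0 : ℝ) 1)
    (hca : ∃ a : ℕ → ℚ, IsCompApprox a α) :
    ∃ b : ℕ → ℚ, IsCompApprox b α ∧
      ((∃ q : ℚ, α = (q : ℝ)) ∨
        Filter.liminf
          (fun s => ((|(α - (b (s + 1) : ℝ)) / (α - (b s : ℝ))| : ℝ) : EReal)) atTop
          = (0 : EReal)) := by
  obtain ⟨a, ha⟩ := hca
  rcases em (∃ q : ℚ, α = q) with hrat | hrat
  · exact ⟨a, ha, Or.inl hrat⟩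
  have hirr : Irrational α := fun ⟨q, hq⟩ => hrat ⟨q, hq.symm⟩
  exact ⟨interleave (undershoot a) a, isCompApprox_interleave (isCompApprox_undershoot ha hirr) ha,
    Or.inr (liminf_interleave_eq_zero hα.1 (fun s => by positivity)
      (tendsto_half_pow_firstChange ha.2.2 hirr)
      (frequently_abs_sub_le_firstChange ha hirr))⟩
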